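/- Let N be an ℕ-valued random variable with E[N] = 1 and E[N²] = 1 + σ² where σ² ∈ (0,∞), let D ≥ 0 be a random variable with E[D] = 1, and let W be a random variable with E[W²] < ∞, on a common probability space. For t > 0 let x_t ∈ (0,1) be the unique solution in [0,1] of x_t = E[e^{−tD} · x_t^N]. Then E[W] − E[e^{−tD} · x_t^{N−1} · W] = √(2t/σ²)·E[W·(N−1)] + o(t^{1/2}) as t → 0⁺, where x_t^{N−1} := x_t^N / x_t. -/

import Mathlib

open MeasureTheory ProbabilityTheory Filter

/-!
Write `y = 1 - x t` and `x ^ n = 1 - n * y + y ^ 2 * r n x`, where `r` is `powRemainder`. Since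
`E[N] = 1`, taking expectations turns the fixed point equation into
`y ^ 2 * E[r N x] = E[(1 - e^{-tD}) * x ^ N]`. The right-hand side is at most `t * E[D]` and
`E[r N x] ≥ E[r N 0] > 0`, so `y → 0`; dominated convergence then gives
`y ^ 2 / t → E[D] / E[r N 1] = 2 * E[D] / σ²`. Finally
`x - e^{-tD} * x ^ N = (1 - e^{-tD}) * x ^ N + y * (∑ i < N, x ^ i - 1)`.
Integrated against `W`, the first term is `o(√t)` because `1 - e^{-tD} ≤ √(t * D)`, and the second
equals `y * E[W * (N - 1)] + o(√t)`; dividing by `x → 1` does not affect the result.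
-/

open scoped Topology

section PowRemainder

variable {R : Type*}

/-- The quotient of the second order Taylor remainder of `x ↦ x ^ n` at `1` by `(1 - x) ^ 2`,
written as a polynomial with nonnegative coefficients so that it makes sense at `x = 1` and is
visibly monotone on nonnegative arguments. -/
def powRemainder [Semiring R] (n : ℕ) (x : R) : R :=
  ∑ i ∈ Finset.range n, ∑ j ∈ Finset.range i, x ^ j

theorem one_sub_sq_mul_powRemainder [CommRing R] (n : ℕ) (x : R) :
    (1 - x) ^ 2 * powRemainder n x = x ^ n - 1 + n * (1 - x) := by
  calc (1 - x) ^ 2 * powRemainder n x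
      = (1 - x) * ∑ i ∈ Finset.range n, (1 - x) * ∑ j ∈ Finset.range i, x ^ j := by
        rw [← Finset.mul_sum, powRemainder]; ring
    _ = (1 - x) * (n - ∑ i ∈ Finset.range n, x ^ i) := by simp [mul_neg_geom_sum]
    _ = x ^ n - 1 + n * (1 - x) := by rw [mul_sub, mul_neg_geom_sum]; ring

theorem powRemainder_zero [Semiring R] (n : ℕ) : powRemainder n (0 : R) = (n - 1 : ℕ) := by
  cases n with
  | zero => simp [powRemainder]
  | succ k => simp [powRemainder, Finset.sum_range_succ' _ k, zero_geom_sum]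

theorem powRemainder_one [Semiring R] (n : ℕ) : powRemainder n (1 : R) = n.choose 2 := by
  rw [Nat.choose_two_right, ← Finset.sum_range_id, Nat.cast_sum]
  simp [powRemainder]

theorem powRemainder_nonneg [Semiring R] [PartialOrder R] [IsOrderedRing R] (n : ℕ) {x : R}
    (hx : 0 ≤ x) : 0 ≤ powRemainder n x :=
  Finset.sum_nonneg fun _ _ => Finset.sum_nonneg fun _ _ => pow_nonneg hx _

theorem powRemainder_le_powRemainder [Semiring R] [PartialOrder R] [IsOrderedRing R] (n : ℕ)
    {x y : R} (hx : 0 ≤ x) (hxy : x ≤ y) : powRemainder n x ≤ powRemainder n y :=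
  Finset.sum_le_sum fun _ _ => Finset.sum_le_sum fun _ _ => pow_le_pow_left₀ hx hxy _

theorem norm_geom_sum_le [SeminormedRing R] [NormOneClass R] {z : R} (hz : ‖z‖ ≤ 1) (n : ℕ) :
    ‖∑ i ∈ Finset.range n, z ^ i‖ ≤ n := by
  simpa using norm_sum_le_of_le (Finset.range n) fun i _ =>
    (norm_pow_le z i).trans (pow_le_one₀ (norm_nonneg z) hz)

theorem norm_powRemainder_le_choose_two [SeminormedRing R] [NormOneClass R] {z : R}
    (hz : ‖z‖ ≤ 1) (n : ℕ) : ‖powRemainder n z‖ ≤ n.choose 2 := by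
  refine (norm_sum_le_of_le _ fun i _ => norm_geom_sum_le hz i).trans_eq ?_
  simpa [powRemainder] using powRemainder_one (R := ℝ) n

theorem continuous_powRemainder [Semiring R] [TopologicalSpace R] [IsTopologicalSemiring R]
    (n : ℕ) : Continuous (powRemainder n : R → R) := by
  unfold powRemainder
  fun_prop

end PowRemainder

section Exp

theorem one_sub_exp_neg_mul_nonneg {t d : ℝ} (ht : 0 ≤ t) (hd : 0 ≤ d) :
    0 ≤ 1 - Real.exp (-t * d) := by
  simpa using mul_nonneg ht hd

theorem one_sub_exp_neg_mul_le_mul (t d : ℝ) : 1 - Real.exp (-t * d) ≤ t * d := by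
  linarith [Real.add_one_le_exp (-t * d)]

theorem one_sub_exp_neg_mul_le_sqrt_mul_sqrt {t d : ℝ} (ht : 0 ≤ t) (hd : 0 ≤ d) :
    1 - Real.exp (-t * d) ≤ √t * √d := by
  rw [← Real.sqrt_mul ht]
  refine Real.le_sqrt_of_sq_le ?_
  nlinarith [one_sub_exp_neg_mul_nonneg ht hd, one_sub_exp_neg_mul_le_mul t d,
    Real.exp_pos (-t * d)]

theorem tendsto_one_sub_exp_neg_mul_div (d : ℝ) :
    Tendsto (fun t : ℝ => (1 - Real.exp (-t * d)) / t) (𝓝[>] 0) (𝓝 d) := by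
  have hderiv : HasDerivAt (fun t : ℝ => 1 - Real.exp (-t * d)) d 0 := by
    simpa using (((hasDerivAt_id (0 : ℝ)).neg.mul_const d).exp).const_sub 1
  simpa [div_eq_inv_mul] using hderiv.tendsto_slope_zero_right

theorem norm_exp_neg_mul_mul_pow_le_one {t d z : ℝ} (ht : 0 ≤ t) (hd : 0 ≤ d)
    (hz : ‖z‖ ≤ 1) (n : ℕ) : ‖Real.exp (-t * d) * z ^ n‖ ≤ 1 := by
  rw [norm_mul, norm_pow, Real.norm_of_nonneg (Real.exp_pos _).le]
  exact mul_le_one₀ (sub_nonneg.1 (one_sub_exp_neg_mul_nonneg ht hd))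
    (pow_nonneg (norm_nonneg z) n) (pow_le_one₀ (norm_nonneg z) hz)

theorem norm_one_sub_exp_neg_mul_mul_pow_le {t d z : ℝ} (ht : 0 ≤ t) (hd : 0 ≤ d)
    (hz : ‖z‖ ≤ 1) (n : ℕ) :
    ‖(1 - Real.exp (-t * d)) * z ^ n‖ ≤ 1 - Real.exp (-t * d) := by
  have hexp := one_sub_exp_neg_mul_nonneg ht hd
  rw [norm_mul, norm_pow, Real.norm_of_nonneg hexp]
  exact mul_le_of_le_one_right hexp (pow_le_one₀ (norm_nonneg z) hz)

end Exp

section DominatedLimits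

variable {Ω : Type*} [MeasurableSpace Ω] {P : Measure Ω} {N : Ω → ℕ} {D : Ω → ℝ}
  {E : Type*} [NormedAddCommGroup E] [NormedSpace ℝ E] {W : Ω → E}

theorem aestronglyMeasurable_comp_nat {β : Type*} [TopologicalSpace β] (hN : AEMeasurable N P)
    (f : ℕ → β) : AEStronglyMeasurable (fun ω => f (N ω)) P :=
  (AEStronglyMeasurable.of_discrete (f := f)).comp_aemeasurable hN

theorem memLp_two_sqrt (hD : Integrable D P) (hD0 : ∀ᵐ ω ∂P, 0 ≤ D ω) :
    MemLp (fun ω => √(D ω)) 2 P := by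
  refine (memLp_two_iff_integrable_sq hD.aemeasurable.sqrt.aestronglyMeasurable).2 (hD.congr ?_)
  filter_upwards [hD0] with ω hω
  exact (Real.sq_sqrt hω).symm

theorem integrable_powRemainder (hN : AEMeasurable N P)
    (hchoose : Integrable (fun ω => ((N ω).choose 2 : ℝ)) P) {z : ℝ} (hz : ‖z‖ ≤ 1) :
    Integrable (fun ω => powRemainder (N ω) z) P :=
  hchoose.mono' (aestronglyMeasurable_comp_nat hN (powRemainder · z))
    (ae_of_all _ fun ω => norm_powRemainder_le_choose_two hz (N ω))

theorem tendsto_integral_powRemainder {ι : Type*} {l : Filter ι} [l.IsCountablyGenerated]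
    {x : ι → ℝ} (hN : AEMeasurable N P)
    (hchoose : Integrable (fun ω => ((N ω).choose 2 : ℝ)) P)
    (hx : ∀ᶠ i in l, ‖x i‖ ≤ 1) (hx1 : Tendsto x l (𝓝 1)) :
    Tendsto (fun i => ∫ ω, powRemainder (N ω) (x i) ∂P) l
      (𝓝 (∫ ω, ((N ω).choose 2 : ℝ) ∂P)) := by
  refine tendsto_integral_filter_of_dominated_convergence _
    (.of_forall fun i => aestronglyMeasurable_comp_nat hN (powRemainder · (x i))) ?_ hchoose
    (ae_of_all _ fun ω => ?_)
  · filter_upwards [hx] with i hi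
    exact ae_of_all _ fun ω => norm_powRemainder_le_choose_two hi (N ω)
  · rw [← powRemainder_one]
    exact ((continuous_powRemainder (N ω)).tendsto 1).comp hx1

theorem tendsto_integral_geom_sum_smul {ι : Type*} {l : Filter ι} [l.IsCountablyGenerated]
    {x : ι → ℝ} (hN : AEMeasurable N P) (hW : AEStronglyMeasurable W P)
    (hNW : Integrable (fun ω => (N ω : ℝ) • W ω) P)
    (hx : ∀ᶠ i in l, ‖x i‖ ≤ 1) (hx1 : Tendsto x l (𝓝 1)) :
    Tendsto (fun i => ∫ ω, (∑ k ∈ Finset.range (N ω), x i ^ k) • W ω ∂P) l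
      (𝓝 (∫ ω, (N ω : ℝ) • W ω ∂P)) := by
  refine tendsto_integral_filter_of_dominated_convergence _ (.of_forall fun i =>
      (aestronglyMeasurable_comp_nat hN fun n => ∑ k ∈ Finset.range n, x i ^ k).smul hW)
    ?_ hNW.norm (ae_of_all _ fun ω => ?_)
  · filter_upwards [hx] with i hi
    refine ae_of_all _ fun ω => ?_
    rw [norm_smul, norm_smul, Real.norm_natCast]
    gcongr
    exact norm_geom_sum_le hi (N ω)
  · have hsum : Tendsto (fun i => ∑ k ∈ Finset.range (N ω), x i ^ k) l (𝓝 (N ω : ℝ)) := by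
      simpa using tendsto_finsetSum (Finset.range (N ω)) fun k _ => hx1.pow k
    exact hsum.smul_const (W ω)

theorem integrable_exp_neg_mul_mul_pow_smul (hN : AEMeasurable N P) (hD : AEMeasurable D P)
    (hD0 : ∀ᵐ ω ∂P, 0 ≤ D ω) (hW : Integrable W P) {t z : ℝ} (ht : 0 ≤ t)
    (hz : ‖z‖ ≤ 1) :
    Integrable (fun ω => (Real.exp (-t * D ω) * z ^ N ω) • W ω) P := by
  refine hW.bdd_smul 1 (AEMeasurable.aestronglyMeasurable (by fun_prop)) ?_
  filter_upwards [hD0] with ω hω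
  exact norm_exp_neg_mul_mul_pow_le_one ht hω hz (N ω)

theorem integrable_pow_smul (hN : AEMeasurable N P) (hW : Integrable W P) {z : ℝ}
    (hz : ‖z‖ ≤ 1) : Integrable (fun ω => z ^ N ω • W ω) P := by
  simpa using integrable_exp_neg_mul_mul_pow_smul (D := 0) (t := 0) hN aemeasurable_zero
    (ae_of_all _ fun _ => le_rfl) hW le_rfl hz

theorem tendsto_integral_one_sub_exp_neg_mul_div_mul_pow {x : ℝ → ℝ} (hN : AEMeasurable N P)
    (hD : Integrable D P) (hD0 : ∀ᵐ ω ∂P, 0 ≤ D ω)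
    (hx : ∀ᶠ t in 𝓝[>] 0, ‖x t‖ ≤ 1) (hx1 : Tendsto x (𝓝[>] 0) (𝓝 1)) :
    Tendsto (fun t => (∫ ω, (1 - Real.exp (-t * D ω)) * x t ^ N ω ∂P) / t) (𝓝[>] 0)
      (𝓝 (∫ ω, D ω ∂P)) := by
  have hDm := hD.aemeasurable
  simp_rw [← integral_div]
  refine tendsto_integral_filter_of_dominated_convergence D
    (.of_forall fun t => AEMeasurable.aestronglyMeasurable (by fun_prop)) ?_ hD
    (ae_of_all _ fun ω => ?_)
  · filter_upwards [hx, self_mem_nhdsWithin] with t hxt (ht : 0 < t)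
    filter_upwards [hD0] with ω hω
    rw [norm_div, Real.norm_of_nonneg ht.le, div_le_iff₀' ht]
    exact (norm_one_sub_exp_neg_mul_mul_pow_le ht.le hω hxt (N ω)).trans
      (one_sub_exp_neg_mul_le_mul t (D ω))
  · simpa [mul_div_right_comm] using (tendsto_one_sub_exp_neg_mul_div (D ω)).mul (hx1.pow (N ω))

theorem tendsto_inv_sqrt_smul_integral_one_sub_exp_neg_mul_mul_pow_smul {x : ℝ → ℝ}
    (hN : AEMeasurable N P) (hD : AEMeasurable D P) (hD0 : ∀ᵐ ω ∂P, 0 ≤ D ω)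
    (hW : AEStronglyMeasurable W P) (hDW : Integrable (fun ω => √(D ω) • W ω) P)
    (hx : ∀ᶠ t in 𝓝[>] 0, ‖x t‖ ≤ 1) (hx1 : Tendsto x (𝓝[>] 0) (𝓝 1)) :
    Tendsto (fun t => (√t)⁻¹ • ∫ ω, ((1 - Real.exp (-t * D ω)) * x t ^ N ω) • W ω ∂P)
      (𝓝[>] 0) (𝓝 0) := by
  simp_rw [← integral_smul]
  rw [← integral_zero Ω E (μ := P)]
  refine tendsto_integral_filter_of_dominated_convergence _ (.of_forall fun t =>
      ((AEMeasurable.aestronglyMeasurable (by fun_prop)).smul hW).const_smul _)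
    ?_ hDW.norm (ae_of_all _ fun ω => ?_)
  · filter_upwards [hx, self_mem_nhdsWithin] with t hxt (ht : 0 < t)
    filter_upwards [hD0] with ω hω
    rw [norm_smul, norm_smul, norm_smul, norm_inv, Real.norm_of_nonneg (Real.sqrt_nonneg t),
      Real.norm_of_nonneg (Real.sqrt_nonneg (D ω)), ← mul_assoc]
    gcongr
    rw [inv_mul_le_iff₀ (Real.sqrt_pos.2 ht)]
    exact (norm_one_sub_exp_neg_mul_mul_pow_le ht.le hω hxt (N ω)).trans
      (one_sub_exp_neg_mul_le_sqrt_mul_sqrt ht.le hω)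
  · have hsqrt : Tendsto (fun t : ℝ => √t) (𝓝[>] 0) (𝓝 0) :=
      (Real.continuous_sqrt.tendsto' 0 0 Real.sqrt_zero).mono_left nhdsWithin_le_nhds
    have hlim := ((hsqrt.mul (tendsto_one_sub_exp_neg_mul_div (D ω))).mul
      (hx1.pow (N ω))).smul_const (W ω)
    simp only [zero_mul, zero_smul] at hlim
    refine hlim.congr fun t => ?_
    rw [smul_smul, mul_div_left_comm, Real.sqrt_div_self', one_div]
    congr 1
    ring

theorem integral_sub_integral_exp_neg_mul_smul (hN : AEMeasurable N P) (hD : AEMeasurable D P)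
    (hD0 : ∀ᵐ ω ∂P, 0 ≤ D ω) (hW : Integrable W P) {t z : ℝ}
    (ht : 0 ≤ t) (hz0 : z ≠ 0) (hz : ‖z‖ ≤ 1) :
    ∫ ω, W ω ∂P - ∫ ω, (Real.exp (-t * D ω) * (z ^ N ω / z)) • W ω ∂P =
      z⁻¹ • (∫ ω, ((1 - Real.exp (-t * D ω)) * z ^ N ω) • W ω ∂P +
        (1 - z) • (∫ ω, (∑ i ∈ Finset.range (N ω), z ^ i) • W ω ∂P - ∫ ω, W ω ∂P)) := by
  have hpow := integrable_pow_smul hN hW hz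
  have hexp := integrable_exp_neg_mul_mul_pow_smul hN hD hD0 hW ht hz
  have hdiff : ∫ ω, ((1 - Real.exp (-t * D ω)) * z ^ N ω) • W ω ∂P =
      ∫ ω, z ^ N ω • W ω ∂P - ∫ ω, (Real.exp (-t * D ω) * z ^ N ω) • W ω ∂P := by
    rw [← integral_sub hpow hexp]
    simp only [sub_mul, one_mul, sub_smul]
  have hgeom : (1 - z) • ∫ ω, (∑ i ∈ Finset.range (N ω), z ^ i) • W ω ∂P =
      ∫ ω, W ω ∂P - ∫ ω, z ^ N ω • W ω ∂P := by
    rw [← integral_smul, ← integral_sub hW hpow]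
    simp only [smul_smul, mul_neg_geom_sum, sub_smul, one_smul]
  have hdiv : ∫ ω, (Real.exp (-t * D ω) * (z ^ N ω / z)) • W ω ∂P =
      z⁻¹ • ∫ ω, (Real.exp (-t * D ω) * z ^ N ω) • W ω ∂P := by
    rw [← integral_smul]
    simp only [smul_smul, div_eq_inv_mul, mul_left_comm]
  rw [eq_inv_smul_iff₀ hz0, smul_sub, smul_sub, hgeom, hdiff, hdiv, smul_inv_smul₀ hz0]
  module

end DominatedLimits

theorem isLittleO_sub_smul_of_tendsto_inv_smul {α E : Type*} [NormedAddCommGroup E]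
    [NormedSpace ℝ E] {l : Filter α} {f : α → E} {g : α → ℝ} {v : E} (hg : ∀ᶠ a in l, g a ≠ 0)
    (h : Tendsto (fun a => (g a)⁻¹ • f a) l (𝓝 v)) :
    (fun a => f a - g a • v) =o[l] g := by
  have hsmul := (Asymptotics.isBigO_refl g l).smul_isLittleO
    ((Asymptotics.isLittleO_one_iff ℝ).2 (tendsto_sub_nhds_zero_iff.2 h))
  refine hsmul.congr' ?_ (.of_forall fun a => mul_one (g a))
  filter_upwards [hg] with a ha
  rw [smul_sub, smul_inv_smul₀ ha]

section FixedPoint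

variable {Ω : Type*} [MeasurableSpace Ω] {P : Measure Ω} {N : Ω → ℕ} {D : Ω → ℝ}

/-- `x` selects, for all sufficiently small `t > 0`, a nontrivial fixed point `x t` of the
discounted generating function `z ↦ E[e^{-tD} * z ^ N]`; the paper writes `x_t` for `x t`. -/
def IsFixedPointBranch (P : Measure Ω) (N : Ω → ℕ) (D : Ω → ℝ) (x : ℝ → ℝ) : Prop :=
  ∀ᶠ t in 𝓝[>] 0, x t ∈ Set.Ioo (0 : ℝ) 1 ∧ x t = ∫ ω, Real.exp (-t * D ω) * x t ^ N ω ∂P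

theorem integral_natCast_choose_two (hN : Integrable (fun ω => (N ω : ℝ)) P)
    (hN2 : Integrable (fun ω => (N ω : ℝ) ^ 2) P) :
    ∫ ω, ((N ω).choose 2 : ℝ) ∂P = (∫ ω, (N ω : ℝ) ^ 2 ∂P - ∫ ω, (N ω : ℝ) ∂P) / 2 := by
  rw [← integral_sub hN2 hN, ← integral_div]
  simp only [Nat.cast_choose_two, mul_sub, mul_one, sq]

theorem integral_powRemainder_zero_pos (hN : AEMeasurable N P)
    (hchoose : 0 < ∫ ω, ((N ω).choose 2 : ℝ) ∂P) :
    0 < ∫ ω, powRemainder (N ω) (0 : ℝ) ∂P := by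
  have hnonneg : 0 ≤ fun ω => powRemainder (N ω) (0 : ℝ) := fun ω =>
    powRemainder_nonneg (N ω) le_rfl
  have hint : Integrable (fun ω => powRemainder (N ω) (0 : ℝ)) P :=
    integrable_powRemainder hN (.of_integral_ne_zero hchoose.ne') (by simp)
  refine (integral_nonneg hnonneg).lt_of_ne' fun hzero => hchoose.ne' ?_
  refine integral_eq_zero_of_ae ?_
  filter_upwards [(integral_eq_zero_iff_of_nonneg hnonneg hint).1 hzero] with ω hω
  have hle : N ω - 1 = 0 := by simpa [powRemainder_zero] using hω
  simp [Nat.choose_eq_zero_of_lt (show N ω < 2 by omega)]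

theorem one_sub_sq_mul_integral_powRemainder [IsProbabilityMeasure P] (hN : AEMeasurable N P)
    (hD : AEMeasurable D P) (hD0 : ∀ᵐ ω ∂P, 0 ≤ D ω) (hN1 : ∫ ω, (N ω : ℝ) ∂P = 1) {t z : ℝ}
    (ht : 0 ≤ t) (hz : ‖z‖ ≤ 1)
    (hfix : z = ∫ ω, Real.exp (-t * D ω) * z ^ N ω ∂P) :
    (1 - z) ^ 2 * ∫ ω, powRemainder (N ω) z ∂P =
      ∫ ω, (1 - Real.exp (-t * D ω)) * z ^ N ω ∂P := by
  have hNint : Integrable (fun ω => (N ω : ℝ)) P := .of_integral_ne_zero (by simp [hN1])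
  have hpow : Integrable (fun ω => z ^ N ω) P := by
    simpa using integrable_pow_smul hN (integrable_const (1 : ℝ)) hz
  have hexp : Integrable (fun ω => Real.exp (-t * D ω) * z ^ N ω) P := by
    simpa using integrable_exp_neg_mul_mul_pow_smul hN hD hD0 (integrable_const (1 : ℝ)) ht hz
  calc (1 - z) ^ 2 * ∫ ω, powRemainder (N ω) z ∂P
      = ∫ ω, (z ^ N ω - 1 + N ω * (1 - z)) ∂P := by
        rw [← integral_const_mul]
        simp only [one_sub_sq_mul_powRemainder]
    _ = ∫ ω, z ^ N ω ∂P - z := by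
        rw [integral_add (f := fun ω => z ^ N ω - 1) (hpow.sub (integrable_const 1))
          (hNint.mul_const _), integral_sub hpow (integrable_const 1), integral_mul_const, hN1]
        simp
    _ = ∫ ω, z ^ N ω ∂P - ∫ ω, Real.exp (-t * D ω) * z ^ N ω ∂P := by rw [← hfix]
    _ = ∫ ω, (1 - Real.exp (-t * D ω)) * z ^ N ω ∂P := by
        rw [← integral_sub hpow hexp]
        simp only [sub_mul, one_mul]

theorem integral_one_sub_exp_neg_mul_mul_pow_le (hD : Integrable D P)
    (hD0 : ∀ᵐ ω ∂P, 0 ≤ D ω) {t z : ℝ} (ht : 0 ≤ t) (hz : ‖z‖ ≤ 1) :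
    ∫ ω, (1 - Real.exp (-t * D ω)) * z ^ N ω ∂P ≤ t * ∫ ω, D ω ∂P := by
  rw [← integral_const_mul]
  refine (Real.le_norm_self _).trans (norm_integral_le_of_norm_le (hD.const_mul t) ?_)
  filter_upwards [hD0] with ω hω
  exact (norm_one_sub_exp_neg_mul_mul_pow_le ht hω hz (N ω)).trans
    (one_sub_exp_neg_mul_le_mul t (D ω))

namespace IsFixedPointBranch

variable {x : ℝ → ℝ}

theorem eventually_norm_le_one (hx : IsFixedPointBranch P N D x) :
    ∀ᶠ t in 𝓝[>] 0, ‖x t‖ ≤ 1 :=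
  hx.mono fun _ h => (Real.norm_of_nonneg h.1.1.le).trans_le h.1.2.le

variable [IsProbabilityMeasure P]

theorem tendsto_one (hx : IsFixedPointBranch P N D x) (hN : AEMeasurable N P)
    (hN1 : ∫ ω, (N ω : ℝ) ∂P = 1) (hchoose : 0 < ∫ ω, ((N ω).choose 2 : ℝ) ∂P)
    (hD : Integrable D P) (hD0 : ∀ᵐ ω ∂P, 0 ≤ D ω) : Tendsto x (𝓝[>] 0) (𝓝 1) := by
  set c := ∫ ω, powRemainder (N ω) (0 : ℝ) ∂P
  have hc : 0 < c := integral_powRemainder_zero_pos hN hchoose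
  have hint {z : ℝ} (hz : ‖z‖ ≤ 1) : Integrable (fun ω => powRemainder (N ω) z) P :=
    integrable_powRemainder hN (.of_integral_ne_zero hchoose.ne') hz
  have hbound : Tendsto (fun t : ℝ => √(t * (∫ ω, D ω ∂P) / c)) (𝓝[>] 0) (𝓝 0) :=
    (Continuous.tendsto' (by fun_prop) 0 0 (by simp)).mono_left nhdsWithin_le_nhds
  refine tendsto_iff_norm_sub_tendsto_zero.2
    (squeeze_zero' (.of_forall fun _ => norm_nonneg _) ?_ hbound)
  filter_upwards [hx, hx.eventually_norm_le_one, self_mem_nhdsWithin]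
    with t ⟨hxt, hfix⟩ hnorm (ht : 0 < t)
  rw [norm_sub_rev]
  refine Real.abs_le_sqrt ((le_div_iff₀ hc).2 ?_)
  calc (1 - x t) ^ 2 * c ≤ (1 - x t) ^ 2 * ∫ ω, powRemainder (N ω) (x t) ∂P := by
        gcongr
        exact integral_mono (hint (by simp)) (hint hnorm) fun ω =>
          powRemainder_le_powRemainder (N ω) le_rfl hxt.1.le
    _ = ∫ ω, (1 - Real.exp (-t * D ω)) * x t ^ N ω ∂P :=
        one_sub_sq_mul_integral_powRemainder hN hD.aemeasurable hD0 hN1 ht.le hnorm hfix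
    _ ≤ t * ∫ ω, D ω ∂P := integral_one_sub_exp_neg_mul_mul_pow_le hD hD0 ht.le hnorm

theorem tendsto_one_sub_sq_div (hx : IsFixedPointBranch P N D x) (hN : AEMeasurable N P)
    (hN1 : ∫ ω, (N ω : ℝ) ∂P = 1) (hchoose : 0 < ∫ ω, ((N ω).choose 2 : ℝ) ∂P)
    (hD : Integrable D P) (hD0 : ∀ᵐ ω ∂P, 0 ≤ D ω) :
    Tendsto (fun t => (1 - x t) ^ 2 / t) (𝓝[>] 0)
      (𝓝 ((∫ ω, D ω ∂P) / ∫ ω, ((N ω).choose 2 : ℝ) ∂P)) := by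
  have hx1 := hx.tendsto_one hN hN1 hchoose hD hD0
  have hrem := tendsto_integral_powRemainder hN (.of_integral_ne_zero hchoose.ne')
    hx.eventually_norm_le_one hx1
  refine ((tendsto_integral_one_sub_exp_neg_mul_div_mul_pow hN hD hD0 hx.eventually_norm_le_one
    hx1).div hrem hchoose.ne').congr' ?_
  filter_upwards [hx, hx.eventually_norm_le_one, hrem.eventually_ne hchoose.ne',
    self_mem_nhdsWithin] with t ⟨_, hfix⟩ hnorm hne (ht : 0 < t)
  rw [Pi.div_apply, ← one_sub_sq_mul_integral_powRemainder hN hD.aemeasurable hD0 hN1 ht.le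
    hnorm hfix, mul_div_right_comm, mul_div_cancel_right₀ _ hne]

theorem tendsto_one_sub_div_sqrt (hx : IsFixedPointBranch P N D x) (hN : AEMeasurable N P)
    (hN1 : ∫ ω, (N ω : ℝ) ∂P = 1) (hchoose : 0 < ∫ ω, ((N ω).choose 2 : ℝ) ∂P)
    (hD : Integrable D P) (hD0 : ∀ᵐ ω ∂P, 0 ≤ D ω) :
    Tendsto (fun t => (1 - x t) / √t) (𝓝[>] 0)
      (𝓝 √((∫ ω, D ω ∂P) / ∫ ω, ((N ω).choose 2 : ℝ) ∂P)) := by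
  refine (hx.tendsto_one_sub_sq_div hN hN1 hchoose hD hD0).sqrt.congr' ?_
  filter_upwards [hx] with t ⟨hxt, _⟩
  rw [Real.sqrt_div (sq_nonneg _), Real.sqrt_sq (sub_nonneg.2 hxt.2.le)]

variable {E : Type*} [NormedAddCommGroup E] [NormedSpace ℝ E] {W : Ω → E}

theorem tendsto_inv_sqrt_smul_integral_sub (hx : IsFixedPointBranch P N D x)
    (hN : AEMeasurable N P) (hN1 : ∫ ω, (N ω : ℝ) ∂P = 1)
    (hchoose : 0 < ∫ ω, ((N ω).choose 2 : ℝ) ∂P) (hD : Integrable D P)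
    (hD0 : ∀ᵐ ω ∂P, 0 ≤ D ω) (hW : Integrable W P)
    (hNW : Integrable (fun ω => (N ω : ℝ) • W ω) P)
    (hDW : Integrable (fun ω => √(D ω) • W ω) P) :
    Tendsto (fun t => (√t)⁻¹ • (∫ ω, W ω ∂P -
        ∫ ω, (Real.exp (-t * D ω) * (x t ^ N ω / x t)) • W ω ∂P)) (𝓝[>] 0)
      (𝓝 (√((∫ ω, D ω ∂P) / ∫ ω, ((N ω).choose 2 : ℝ) ∂P) • ∫ ω, ((N ω : ℝ) - 1) • W ω ∂P)) := by
  have hx1 := hx.tendsto_one hN hN1 hchoose hD hD0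
  have hexp := tendsto_inv_sqrt_smul_integral_one_sub_exp_neg_mul_mul_pow_smul hN hD.aemeasurable
    hD0 hW.aestronglyMeasurable hDW hx.eventually_norm_le_one hx1
  have hgeom := (tendsto_integral_geom_sum_smul hN hW.aestronglyMeasurable hNW
    hx.eventually_norm_le_one hx1).sub_const (∫ ω, W ω ∂P)
  have hlim := (hx1.inv₀ one_ne_zero).smul
    (hexp.add ((hx.tendsto_one_sub_div_sqrt hN hN1 hchoose hD hD0).smul hgeom))
  rw [inv_one, one_smul, zero_add, ← integral_sub hNW hW] at hlim
  simp only [sub_smul, one_smul]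
  refine hlim.congr' ?_
  filter_upwards [hx, hx.eventually_norm_le_one, self_mem_nhdsWithin]
    with t ⟨hxt, _⟩ hnorm (ht : 0 < t)
  rw [integral_sub_integral_exp_neg_mul_smul hN hD.aemeasurable hD0 hW ht.le hxt.1.ne' hnorm]
  module

end IsFixedPointBranch

theorem speed_cv_expectation_general [IsProbabilityMeasure P] {E : Type*}
    [NormedAddCommGroup E] [NormedSpace ℝ E] {W : Ω → E} {x : ℝ → ℝ} {σ2 : ℝ}
    (hN : AEMeasurable N P) (hσ : 0 < σ2) (hN1 : ∫ ω, (N ω : ℝ) ∂P = 1)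
    (hN2 : ∫ ω, (N ω : ℝ) ^ 2 ∂P = 1 + σ2) (hD : Integrable D P) (hD0 : ∀ᵐ ω ∂P, 0 ≤ D ω)
    (hW : Integrable W P) (hNW : Integrable (fun ω => (N ω : ℝ) • W ω) P)
    (hDW : Integrable (fun ω => √(D ω) • W ω) P) (hx : IsFixedPointBranch P N D x) :
    (fun t => ∫ ω, W ω ∂P - ∫ ω, (Real.exp (-t * D ω) * (x t ^ N ω / x t)) • W ω ∂P -
      √(2 * t * (∫ ω, D ω ∂P) / σ2) • ∫ ω, ((N ω : ℝ) - 1) • W ω ∂P) =o[𝓝[>] 0]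
      fun t => √t := by
  have hchoose : ∫ ω, ((N ω).choose 2 : ℝ) ∂P = σ2 / 2 := by
    rw [integral_natCast_choose_two (.of_integral_ne_zero (by simp [hN1]))
      (.of_integral_ne_zero (by rw [hN2]; positivity)), hN1, hN2, add_sub_cancel_left]
  have hsqrt : ∀ᶠ t : ℝ in 𝓝[>] 0, √t ≠ 0 :=
    eventually_mem_nhdsWithin.mono fun t ht => (Real.sqrt_pos.2 ht).ne'
  refine (isLittleO_sub_smul_of_tendsto_inv_smul hsqrt (hx.tendsto_inv_sqrt_smul_integral_sub hN
    hN1 (by rw [hchoose]; positivity) hD hD0 hW hNW hDW)).congr' ?_ .rfl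
  filter_upwards [self_mem_nhdsWithin] with t (ht : 0 < t)
  rw [smul_smul, hchoose, ← Real.sqrt_mul ht.le]
  congr 3
  field_simp

end FixedPoint

/-- Lemma 26 of the paper.  Let `N` be `ℕ`-valued with `E[N] = 1`,
`E[N²] = 1 + σ²`, `σ² ∈ (0,∞)`, `D ≥ 0` with `E[D] = 1`, and `W` with `E[W²] < ∞`.  With
`x_t ∈ (0,1)` the unique fixed point `x_t = E[e^{−tD}·x_t^N]`,
`E[W] − E[e^{−tD}·x_t^{N−1}·W] = √(2t/σ²)·E[W·(N−1)] + o(t^{1/2})` as `t → 0⁺`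
(where `x_t^{N−1} = x_t^N / x_t`). -/
theorem speed_cv_expectation
    {Ω : Type*} [MeasurableSpace Ω] (P : Measure Ω) [IsProbabilityMeasure P]
    (N : Ω → ℕ) (D : Ω → ℝ) (hNm : Measurable N) (hDm : Measurable D)
    (σ2 : ℝ) (hσ : 0 < σ2)
    (hN1 : ∫ ω, (N ω : ℝ) ∂P = 1)
    (hN2 : ∫ ω, ((N ω : ℝ)) ^ 2 ∂P = 1 + σ2)
    (hD0 : ∀ᵐ ω ∂P, 0 ≤ D ω) (hD1 : ∫ ω, D ω ∂P = 1)
    (W : Ω → ℝ) (hWm : Measurable W) (hW2 : Integrable (fun ω => W ω ^ 2) P)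
    (xf : ℝ → ℝ)
    (hxf : ∀ t : ℝ, 0 < t → xf t ∈ Set.Ioo (0 : ℝ) 1 ∧
        xf t = ∫ ω, Real.exp (-t * D ω) * (xf t) ^ (N ω) ∂P) :
    Asymptotics.IsLittleO (nhdsWithin 0 (Set.Ioi 0))
      (fun t : ℝ =>
        (∫ ω, W ω ∂P) -
          (∫ ω, Real.exp (-t * D ω) * ((xf t) ^ (N ω) / xf t) * W ω ∂P) -
          Real.sqrt (2 * t / σ2) * ∫ ω, W ω * ((N ω : ℝ) - 1) ∂P)
      (fun t : ℝ => Real.sqrt t) := by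
  have hNL : MemLp (fun ω => (N ω : ℝ)) 2 P :=
    (memLp_two_iff_integrable_sq (by fun_prop)).2 (.of_integral_ne_zero (by rw [hN2]; positivity))
  have hWL : MemLp W 2 P := (memLp_two_iff_integrable_sq hWm.aestronglyMeasurable).2 hW2
  have hD : Integrable D P := .of_integral_ne_zero (by simp [hD1])
  simpa [hD1, mul_comm (W _)] using speed_cv_expectation_general hNm.aemeasurable hσ hN1 hN2 hD
    hD0 (hWL.integrable one_le_two) (hNL.integrable_mul hWL)
    ((memLp_two_sqrt hD hD0).integrable_mul hWL) (eventually_mem_nhdsWithin.mono hxf)
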